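/- arXiv:1201.0609 — 2 statements merged into one kernel-verified Lean document; each statement's English description precedes it below -/
import Mathlib

section
/- Let φ : ℕ → ℂ. Suppose there exist a constant c ∈ ℂ and a complex Borel measure ν on the open unit disc 𝔻 such that φ(n) = c + ∫_𝔻 sⁿ dν(s) for all n ∈ ℕ and ∫_𝔻 |1−s|/(1−|s|) d|ν|(s) < ∞. Then φ belongs to the class 𝒞, and moreover ‖h_φ‖₁ + ‖k_φ‖₁ ≤ ∫_𝔻 |1−s|/(1−|s|) d|ν|(s). -/
open MeasureTheory Filter

noncomputable section

/-- The Hilbert space `ℓ²(ℕ; ℂ)`. -/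
abbrev ell2 : Type := lp (fun _ : ℕ => ℂ) 2

/-- A matrix `h : ℕ → ℕ → ℂ` is of trace class if it admits a representation
`h i j = ∑ₖ xₖ(i) · conj (yₖ(j))` with `xₖ, yₖ ∈ ℓ²(ℕ; ℂ)` and `∑ₖ ‖xₖ‖₂·‖yₖ‖₂ < ∞`. -/
def IsTraceClass (h : ℕ → ℕ → ℂ) : Prop :=
  ∃ x y : ℕ → ell2,
    (Summable fun k => ‖x k‖ * ‖y k‖) ∧
    ∀ i j, h i j = ∑' k, (x k : ℕ → ℂ) i * (starRingEnd ℂ) ((y k : ℕ → ℂ) j)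

/-- The trace norm of a matrix: the infimum of `∑ₖ ‖xₖ‖₂·‖yₖ‖₂` over all representations
`h i j = ∑ₖ xₖ(i) · conj (yₖ(j))` as above. -/
def traceNorm (h : ℕ → ℕ → ℂ) : ℝ :=
  sInf { c : ℝ | ∃ x y : ℕ → ell2,
    (Summable fun k => ‖x k‖ * ‖y k‖) ∧
    (∀ i j, h i j = ∑' k, (x k : ℕ → ℂ) i * (starRingEnd ℂ) ((y k : ℕ → ℂ) j)) ∧
    c = ∑' k, ‖x k‖ * ‖y k‖ }

/-- The Hankel matrix `h_φ(i,j) = φ(i+j) − φ(i+j+1)`. -/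
def hankelH (φ : ℕ → ℂ) : ℕ → ℕ → ℂ := fun i j => φ (i+j) - φ (i+j+1)

/-- The Hankel matrix `k_φ(i,j) = φ(i+j+1) − φ(i+j+2)`. -/
def hankelK (φ : ℕ → ℂ) : ℕ → ℕ → ℂ := fun i j => φ (i+j+1) - φ (i+j+2)

/-- The class `𝒞`: both Hankel matrices `h_φ` and `k_φ` are of trace class. -/
def MemC (φ : ℕ → ℂ) : Prop := IsTraceClass (hankelH φ) ∧ IsTraceClass (hankelK φ)

/-- The norm `‖φ‖_𝒞 = ‖h_φ‖₁ + ‖k_φ‖₁ + |c|`, where `c = lim_{n→∞} φ(n)`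
(expressed via `limUnder`, which gives the limit whenever it exists). -/
def CNorm (φ : ℕ → ℂ) : ℝ :=
  traceNorm (hankelH φ) + traceNorm (hankelK φ) + ‖limUnder atTop φ‖

open scoped InnerProductSpace ComplexConjugate

/-!
Taking differences, the entries of `h_φ` are moments `∫ g zⁱ⁺ʲ` of the density `g = f (1 - z)`, and
those of `k_φ` are moments of `g z`. With a square root `w` of `g`, such a moment is the inner
product in `L²(ρ)` of `w zⁱ` with the conjugate of `w zʲ`, and summing the squared norms gives
`∑ᵢ ∫ |g| |z|²ⁱ = ∫ |g| / (1 - |z|²)`. A matrix `⟪bⱼ, aᵢ⟫` with square-summable `a` and `b` is a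
product of two Hilbert–Schmidt matrices, hence of trace class with trace norm at most the product
of the `ℓ²` norms. Finally the two bounds add up, since
`(1 + |z|) / (1 - |z|²) = 1 / (1 - |z|)`.
-/

theorem extend_zero_map₂ {κ ι α β γ : Type*} [Zero α] [Zero β] [Zero γ] {g : κ → ι}
    (hg : Function.Injective g) (F : α → β → γ) (hF : F 0 0 = 0) (x : κ → α) (y : κ → β) :
    (fun n => F (Function.extend g x 0 n) (Function.extend g y 0 n)) =
      Function.extend g (fun k => F (x k) (y k)) 0 := by
  funext n
  by_cases hn : ∃ k, g k = n
  · obtain ⟨k, rfl⟩ := hn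
    simp only [hg.extend_apply]
  · simp only [Function.extend_apply' _ _ _ hn, Pi.zero_apply, hF]

universe u in
theorem exists_countable_orthonormal_hasSum_inner_mul_inner {ι 𝕜 : Type*} {H : Type u}
    [RCLike 𝕜] [NormedAddCommGroup H] [InnerProductSpace 𝕜 H] [CompleteSpace H] [Countable ι]
    (a : ι → H) :
    ∃ (κ : Type u) (e : κ → H), Countable κ ∧ Orthonormal 𝕜 e ∧
      ∀ i v, HasSum (fun k => ⟪v, e k⟫_𝕜 * ⟪e k, a i⟫_𝕜) ⟪v, a i⟫_𝕜 := by
  obtain ⟨S, b, -⟩ := exists_hilbertBasis 𝕜 H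
  -- `H` need not be separable, but only countably many basis vectors see some `a i`.
  let T : Set S := ⋃ i, Function.support fun k => ‖⟪b k, a i⟫_𝕜‖ ^ 2
  have countable_T : T.Countable := Set.countable_iUnion fun i =>
    (b.orthonormal.inner_products_summable (a i)).countable_support
  refine ⟨T, fun k => b k, countable_T.to_subtype, b.orthonormal.comp _ Subtype.val_injective,
    fun i v => ?_⟩
  refine (hasSum_subtype_iff_of_support_subset fun k hk => ?_).2 (b.hasSum_inner_mul_inner v (a i))
  exact Set.mem_iUnion_of_mem i (by simpa using right_ne_zero_of_mul hk)

section TraceClass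

variable {ι H : Type*} [NormedAddCommGroup H] [InnerProductSpace ℂ H] {h : ℕ → ℕ → ℂ}

theorem isTraceClass_and_traceNorm_le_tsum [Countable ι] {x y : ι → ell2}
    (hxy : Summable fun k => ‖x k‖ * ‖y k‖)
    (hh : ∀ i j, h i j = ∑' k, (x k : ℕ → ℂ) i * conj ((y k : ℕ → ℂ) j)) :
    IsTraceClass h ∧ traceNorm h ≤ ∑' k, ‖x k‖ * ‖y k‖ := by
  obtain ⟨g, hg⟩ := exists_injective_nat ι
  let x' : ℕ → ell2 := Function.extend g x 0
  let y' : ℕ → ell2 := Function.extend g y 0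
  have extend_norm : (fun n => ‖x' n‖ * ‖y' n‖) = _ :=
    extend_zero_map₂ hg (fun u v : ell2 => ‖u‖ * ‖v‖) (by simp) x y
  have extend_entry (i j : ℕ) : (fun n => (x' n : ℕ → ℂ) i * conj ((y' n : ℕ → ℂ) j)) = _ :=
    extend_zero_map₂ hg (fun u v : ell2 => (u : ℕ → ℂ) i * conj ((v : ℕ → ℂ) j)) (by simp) x y
  have summable' : Summable fun n => ‖x' n‖ * ‖y' n‖ := by
    rw [extend_norm]
    exact (summable_extend_zero hg).2 hxy
  have entry' (i j : ℕ) : h i j = ∑' n, (x' n : ℕ → ℂ) i * conj ((y' n : ℕ → ℂ) j) := by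
    rw [extend_entry, tsum_extend_zero hg, hh]
  refine ⟨⟨x', y', summable', entry'⟩, csInf_le ⟨0, ?_⟩ ⟨x', y', summable', entry', ?_⟩⟩
  · rintro _ ⟨u, v, -, -, rfl⟩
    exact tsum_nonneg fun k => by positivity
  · rw [extend_norm, tsum_extend_zero hg]

theorem memℓp_inner_of_orthonormal {e : ι → H} (he : Orthonormal ℂ e) {v : ℕ → H}
    (hv : Summable fun i => ‖v i‖ ^ 2) (k : ι) : Memℓp (fun i => ⟪e k, v i⟫_ℂ) 2 := by
  refine memℓp_gen (Summable.of_nonneg_of_le (fun _ => by positivity) (fun i => ?_) hv)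
  rw [ENNReal.toReal_ofNat, Real.rpow_two]
  gcongr
  simpa [he.1 k] using norm_inner_le_norm (𝕜 := ℂ) (e k) (v i)

/-- The `k`-th row `(⟪eₖ, vᵢ⟫)ᵢ` of the matrix of coordinates of a square-summable family `v` with
respect to an orthonormal family `e`, as an element of `ℓ²`. These rows are the vectors `xₖ`, `yₖ`
of the trace-class representations below. -/
def coordRow {e : ι → H} (he : Orthonormal ℂ e) {v : ℕ → H}
    (hv : Summable fun i => ‖v i‖ ^ 2) (k : ι) : ell2 :=
  ⟨fun i => ⟪e k, v i⟫_ℂ, memℓp_inner_of_orthonormal he hv k⟩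

theorem coordRow_apply {e : ι → H} (he : Orthonormal ℂ e) {v : ℕ → H}
    (hv : Summable fun i => ‖v i‖ ^ 2) (k : ι) (i : ℕ) :
    (coordRow he hv k : ℕ → ℂ) i = ⟪e k, v i⟫_ℂ :=
  rfl

theorem summable_sq_norm_coordRow_and_tsum_le {e : ι → H} (he : Orthonormal ℂ e) {v : ℕ → H}
    (hv : Summable fun i => ‖v i‖ ^ 2) :
    (Summable fun k => ‖coordRow he hv k‖ ^ 2) ∧
      ∑' k, ‖coordRow he hv k‖ ^ 2 ≤ ∑' i, ‖v i‖ ^ 2 := by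
  have bessel_summable (i : ℕ) : Summable fun k => ‖⟪e k, v i⟫_ℂ‖ ^ 2 :=
    he.inner_products_summable (v i)
  have bessel (i : ℕ) : ∑' k, ‖⟪e k, v i⟫_ℂ‖ ^ 2 ≤ ‖v i‖ ^ 2 := he.tsum_inner_products_le (v i)
  have summable_bessel : Summable fun i => ∑' k, ‖⟪e k, v i⟫_ℂ‖ ^ 2 :=
    Summable.of_nonneg_of_le (fun _ => tsum_nonneg fun _ => by positivity) bessel hv
  have summable_entries : Summable fun p : ℕ × ι => ‖⟪e p.2, v p.1⟫_ℂ‖ ^ 2 :=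
    (summable_prod_of_nonneg fun _ => by positivity).2 ⟨bessel_summable, summable_bessel⟩
  have sq_norm_coordRow (k : ι) : ‖coordRow he hv k‖ ^ 2 = ∑' i, ‖⟪e k, v i⟫_ℂ‖ ^ 2 := by
    simpa [coordRow_apply] using lp.norm_rpow_eq_tsum (p := 2) (by norm_num) (coordRow he hv k)
  simp only [sq_norm_coordRow]
  refine ⟨summable_entries.prod_symm.prod, ?_⟩
  calc ∑' k, ∑' i, ‖⟪e k, v i⟫_ℂ‖ ^ 2
      = ∑' i, ∑' k, ‖⟪e k, v i⟫_ℂ‖ ^ 2 := summable_entries.tsum_comm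
    _ ≤ ∑' i, ‖v i‖ ^ 2 := summable_bessel.tsum_le_tsum bessel hv

theorem isTraceClass_inner_and_traceNorm_le [CompleteSpace H] {a b : ℕ → H}
    (ha : Summable fun i => ‖a i‖ ^ 2) (hb : Summable fun j => ‖b j‖ ^ 2)
    (hh : ∀ i j, h i j = ⟪b j, a i⟫_ℂ) :
    IsTraceClass h ∧ traceNorm h ≤ √(∑' i, ‖a i‖ ^ 2) * √(∑' j, ‖b j‖ ^ 2) := by
  obtain ⟨κ, e, _, he, expand⟩ :=
    exists_countable_orthonormal_hasSum_inner_mul_inner (𝕜 := ℂ) a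
  obtain ⟨hx, x_le⟩ := summable_sq_norm_coordRow_and_tsum_le he ha
  obtain ⟨hy, y_le⟩ := summable_sq_norm_coordRow_and_tsum_le he hb
  obtain ⟨hxy, cauchy_schwarz⟩ := Real.summable_and_inner_le_Lp_mul_Lq_tsum_of_nonneg
    Real.HolderConjugate.two_two (fun k => norm_nonneg (coordRow he ha k))
    (fun k => norm_nonneg (coordRow he hb k)) (by simpa using hx) (by simpa using hy)
  simp only [Real.rpow_two, ← Real.sqrt_eq_rpow] at cauchy_schwarz
  have entry (i j : ℕ) : h i j = ∑' k,
      (coordRow he ha k : ℕ → ℂ) i * conj ((coordRow he hb k : ℕ → ℂ) j) := by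
    simp only [coordRow_apply, inner_conj_symm, hh, ← (expand i (b j)).tsum_eq, mul_comm]
  obtain ⟨trace_class, norm_le⟩ := isTraceClass_and_traceNorm_le_tsum hxy entry
  refine ⟨trace_class, norm_le.trans (cauchy_schwarz.trans ?_)⟩
  gcongr

end TraceClass

section L2

variable {Ω : Type*} [MeasurableSpace Ω] {ρ : Measure Ω}

theorem inner_toLp_toLp {𝕜 E : Type*} [RCLike 𝕜] [NormedAddCommGroup E] [InnerProductSpace 𝕜 E]
    {u v : Ω → E} (hu : MemLp u 2 ρ) (hv : MemLp v 2 ρ) :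
    ⟪hu.toLp u, hv.toLp v⟫_𝕜 = ∫ ω, ⟪u ω, v ω⟫_𝕜 ∂ρ := by
  rw [L2.inner_def]
  refine integral_congr_ae ?_
  filter_upwards [hu.coeFn_toLp, hv.coeFn_toLp] with ω hω hω'
  rw [hω, hω']

theorem sq_norm_toLp {E : Type*} [NormedAddCommGroup E] [InnerProductSpace ℝ E]
    {u : Ω → E} (hu : MemLp u 2 ρ) : ‖hu.toLp u‖ ^ 2 = ∫ ω, ‖u ω‖ ^ 2 ∂ρ := by
  simp only [← real_inner_self_eq_norm_sq, inner_toLp_toLp]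

theorem isTraceClass_integral_mul_and_traceNorm_le {u v : ℕ → Ω → ℂ} {h : ℕ → ℕ → ℂ}
    (hu : ∀ i, MemLp (u i) 2 ρ) (hv : ∀ j, MemLp (v j) 2 ρ)
    (hu' : Summable fun i => ∫ ω, ‖u i ω‖ ^ 2 ∂ρ) (hv' : Summable fun j => ∫ ω, ‖v j ω‖ ^ 2 ∂ρ)
    (hh : ∀ i j, h i j = ∫ ω, u i ω * v j ω ∂ρ) :
    IsTraceClass h ∧
      traceNorm h ≤ √(∑' i, ∫ ω, ‖u i ω‖ ^ 2 ∂ρ) * √(∑' j, ∫ ω, ‖v j ω‖ ^ 2 ∂ρ) := by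
  let a (i : ℕ) : Lp ℂ 2 ρ := (hu i).toLp (u i)
  let b (j : ℕ) : Lp ℂ 2 ρ := (hv j).star.toLp (star (v j))
  have norm_a (i : ℕ) : ‖a i‖ ^ 2 = ∫ ω, ‖u i ω‖ ^ 2 ∂ρ := sq_norm_toLp (hu i)
  have norm_b (j : ℕ) : ‖b j‖ ^ 2 = ∫ ω, ‖v j ω‖ ^ 2 ∂ρ := by
    simpa only [Pi.star_apply, norm_star] using sq_norm_toLp (hv j).star
  have inner_b_a (i j : ℕ) : h i j = ⟪b j, a i⟫_ℂ := by
    simp [hh, a, b, inner_toLp_toLp]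
  simp only [← norm_a, ← norm_b] at hu' hv' ⊢
  exact isTraceClass_inner_and_traceNorm_le hu' hv' inner_b_a

theorem integrable_mul_pow {w r : Ω → ℝ} (hw : AEStronglyMeasurable w ρ)
    (hr : AEStronglyMeasurable r ρ) (hr0 : ∀ᵐ ω ∂ρ, 0 ≤ r ω) (hr1 : ∀ᵐ ω ∂ρ, r ω < 1)
    (hint : Integrable (fun ω => w ω / (1 - r ω)) ρ) (i : ℕ) :
    Integrable (fun ω => w ω * r ω ^ i) ρ := by
  refine hint.mono (hw.mul (hr.pow i)) ?_
  filter_upwards [hr0, hr1] with ω h0 h1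
  have pos : 0 < 1 - r ω := sub_pos.2 h1
  rw [norm_mul, norm_pow, norm_div, Real.norm_of_nonneg h0, Real.norm_of_nonneg pos.le]
  calc ‖w ω‖ * r ω ^ i ≤ ‖w ω‖ := mul_le_of_le_one_right (norm_nonneg _) (pow_le_one₀ h0 h1.le)
    _ ≤ ‖w ω‖ / (1 - r ω) := le_div_self (norm_nonneg _) pos (sub_le_self 1 h0)

theorem hasSum_integral_mul_pow {w r : Ω → ℝ} (hw : AEStronglyMeasurable w ρ)
    (hr : AEStronglyMeasurable r ρ) (hr0 : ∀ᵐ ω ∂ρ, 0 ≤ r ω) (hr1 : ∀ᵐ ω ∂ρ, r ω < 1)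
    (hint : Integrable (fun ω => w ω / (1 - r ω)) ρ) :
    HasSum (fun i : ℕ => ∫ ω, w ω * r ω ^ i ∂ρ) (∫ ω, w ω / (1 - r ω) ∂ρ) := by
  have geometric (t : ℝ) {q : ℝ} (hq0 : 0 ≤ q) (hq1 : q < 1) :
      HasSum (fun i : ℕ => t * q ^ i) (t / (1 - q)) :=
    (hasSum_geometric_of_lt_one hq0 hq1).mul_left t
  refine hasSum_integral_of_dominated_convergence (fun i ω => ‖w ω‖ * r ω ^ i)
    (fun i => hw.mul (hr.pow i)) ?_ ?_ ?_ ?_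
  · refine fun i => hr0.mono fun ω h0 => ?_
    rw [norm_mul, norm_pow, Real.norm_of_nonneg h0]
  · filter_upwards [hr0, hr1] with ω h0 h1 using (geometric _ h0 h1).summable
  · refine hint.norm.congr ?_
    filter_upwards [hr0, hr1] with ω h0 h1
    rw [(geometric _ h0 h1).tsum_eq, norm_div, Real.norm_of_nonneg (sub_nonneg.2 h1.le)]
  · filter_upwards [hr0, hr1] with ω h0 h1 using geometric _ h0 h1

end L2

section Hankel

variable {Ω : Type*} [MeasurableSpace Ω] {ρ : Measure Ω} {z f g : Ω → ℂ}

theorem isTraceClass_integral_mul_pow_add_and_traceNorm_le {h : ℕ → ℕ → ℂ}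
    (hz : AEStronglyMeasurable z ρ) (hz1 : ∀ᵐ ω ∂ρ, ‖z ω‖ < 1) (hg : AEStronglyMeasurable g ρ)
    (hint : Integrable (fun ω => ‖g ω‖ / (1 - ‖z ω‖ ^ 2)) ρ)
    (hh : ∀ i j, h i j = ∫ ω, g ω * z ω ^ (i + j) ∂ρ) :
    IsTraceClass h ∧ traceNorm h ≤ ∫ ω, ‖g ω‖ / (1 - ‖z ω‖ ^ 2) ∂ρ := by
  let w (ω : Ω) : ℂ := g ω ^ ((2 : ℕ) : ℂ)⁻¹
  have sq_w (ω : Ω) : w ω ^ 2 = g ω := Complex.cpow_nat_inv_pow (g ω) two_ne_zero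
  have hw : AEStronglyMeasurable w ρ := (hg.aemeasurable.pow_const _).aestronglyMeasurable
  let u (i : ℕ) (ω : Ω) : ℂ := w ω * z ω ^ i
  have sq_norm_u (i : ℕ) (ω : Ω) : ‖u i ω‖ ^ 2 = ‖g ω‖ * (‖z ω‖ ^ 2) ^ i := by
    rw [norm_mul, mul_pow, ← norm_pow, sq_w, norm_pow, pow_right_comm]
  have sq_norm_z_meas : AEStronglyMeasurable (fun ω => ‖z ω‖ ^ 2) ρ := hz.norm.pow 2
  have sq_norm_z_nonneg : ∀ᵐ ω ∂ρ, 0 ≤ ‖z ω‖ ^ 2 := .of_forall fun ω => by positivity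
  have sq_norm_z_lt_one : ∀ᵐ ω ∂ρ, ‖z ω‖ ^ 2 < 1 :=
    hz1.mono fun ω hω => pow_lt_one₀ (norm_nonneg _) hω two_ne_zero
  have memLp_u (i : ℕ) : MemLp (u i) 2 ρ := by
    have hu : AEStronglyMeasurable (u i) ρ := hw.mul (hz.pow i)
    rw [memLp_two_iff_integrable_sq_norm hu]
    simpa only [sq_norm_u] using
      integrable_mul_pow hg.norm sq_norm_z_meas sq_norm_z_nonneg sq_norm_z_lt_one hint i
  have sum_u : HasSum (fun i => ∫ ω, ‖u i ω‖ ^ 2 ∂ρ) (∫ ω, ‖g ω‖ / (1 - ‖z ω‖ ^ 2) ∂ρ) := by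
    simpa only [sq_norm_u] using
      hasSum_integral_mul_pow hg.norm sq_norm_z_meas sq_norm_z_nonneg sq_norm_z_lt_one hint
  have kernel (i j : ℕ) : h i j = ∫ ω, u i ω * u j ω ∂ρ := by
    simp only [hh, u, ← sq_w]
    congr! 2 with ω
    ring
  have trace_class :=
    isTraceClass_integral_mul_and_traceNorm_le memLp_u memLp_u sum_u.summable sum_u.summable kernel
  rwa [Real.mul_self_sqrt (tsum_nonneg fun i => by positivity), sum_u.tsum_eq] at trace_class

theorem div_one_sub_sq_add_mul_div_one_sub_sq {K : Type*} [Field K] (t : K) {r : K}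
    (hr : 1 + r ≠ 0) :
    t / (1 - r ^ 2) + t * r / (1 - r ^ 2) = t / (1 - r) := by
  have factor : 1 - r ^ 2 = (1 + r) * (1 - r) := by ring
  rw [← add_div, ← mul_one_add, factor, mul_comm t, mul_div_mul_left _ _ hr]

theorem memC_and_traceNorm_add_le_of_sub_succ_eq_integral {φ : ℕ → ℂ}
    (hz : AEStronglyMeasurable z ρ) (hz1 : ∀ᵐ ω ∂ρ, ‖z ω‖ < 1) (hg : AEStronglyMeasurable g ρ)
    (hint : Integrable (fun ω => ‖g ω‖ / (1 - ‖z ω‖)) ρ)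
    (hφ : ∀ n, φ n - φ (n + 1) = ∫ ω, g ω * z ω ^ n ∂ρ) :
    MemC φ ∧ traceNorm (hankelH φ) + traceNorm (hankelK φ) ≤ ∫ ω, ‖g ω‖ / (1 - ‖z ω‖) ∂ρ := by
  let weightH (ω : Ω) : ℝ := ‖g ω‖ / (1 - ‖z ω‖ ^ 2)
  let weightK (ω : Ω) : ℝ := ‖g ω * z ω‖ / (1 - ‖z ω‖ ^ 2)
  have weight_add (ω : Ω) : (weightH + weightK) ω = ‖g ω‖ / (1 - ‖z ω‖) := by
    simpa only [Pi.add_apply, weightH, weightK, norm_mul] using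
      div_one_sub_sq_add_mul_div_one_sub_sq ‖g ω‖ (by positivity : 1 + ‖z ω‖ ≠ 0)
  have denom_nonneg : ∀ᵐ ω ∂ρ, 0 ≤ 1 - ‖z ω‖ ^ 2 :=
    hz1.mono fun ω hω => sub_nonneg.2 (pow_le_one₀ (norm_nonneg _) hω.le)
  have weightH_meas : AEStronglyMeasurable weightH ρ :=
    hg.norm.div₀ (aestronglyMeasurable_const.sub (hz.norm.pow 2))
  obtain ⟨weightH_int, weightK_int⟩ : Integrable weightH ρ ∧ Integrable weightK ρ := by
    rw [← integrable_add_iff_of_nonneg weightH_meas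
      (denom_nonneg.mono fun ω hω => div_nonneg (norm_nonneg _) hω)
      (denom_nonneg.mono fun ω hω => div_nonneg (norm_nonneg _) hω)]
    exact hint.congr (.of_forall fun ω => (weight_add ω).symm)
  obtain ⟨traceClassH, normH_le⟩ :=
    isTraceClass_integral_mul_pow_add_and_traceNorm_le (h := hankelH φ) hz hz1 hg weightH_int
      fun i j => hφ (i + j)
  obtain ⟨traceClassK, normK_le⟩ :=
    isTraceClass_integral_mul_pow_add_and_traceNorm_le (h := hankelK φ) hz hz1 (hg.mul hz)
      weightK_int fun i j => by simp only [hankelK, hφ, pow_succ', mul_assoc, Pi.mul_apply]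
  refine ⟨⟨traceClassH, traceClassK⟩, (add_le_add normH_le normK_le).trans_eq ?_⟩
  calc ∫ ω, weightH ω ∂ρ + ∫ ω, weightK ω ∂ρ
      = ∫ ω, (weightH + weightK) ω ∂ρ := (integral_add weightH_int weightK_int).symm
    _ = ∫ ω, ‖g ω‖ / (1 - ‖z ω‖) ∂ρ := integral_congr_ae (.of_forall weight_add)

theorem one_le_norm_one_sub_div_one_sub_norm {A : Type*} [SeminormedRing A]
    [NormOneClass A] {s : A} (hs : ‖s‖ < 1) :
    1 ≤ ‖1 - s‖ / (1 - ‖s‖) := by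
  rw [one_le_div (sub_pos.2 hs)]
  simpa only [norm_one] using norm_sub_norm_le 1 s

theorem integrable_mul_pow_of_norm_le_one (hz : AEStronglyMeasurable z ρ)
    (hz1 : ∀ᵐ ω ∂ρ, ‖z ω‖ ≤ 1) (hf : Integrable f ρ) (n : ℕ) :
    Integrable (fun ω => f ω * z ω ^ n) ρ := by
  refine hf.mul_bdd (c := 1) (hz.pow n) ?_
  filter_upwards [hz1] with ω hω
  rw [norm_pow]
  exact pow_le_one₀ (norm_nonneg _) hω

theorem stmt0_general {φ : ℕ → ℂ} {c : ℂ} (hz : AEStronglyMeasurable z ρ)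
    (hz1 : ∀ᵐ ω ∂ρ, ‖z ω‖ < 1) (hf : AEStronglyMeasurable f ρ)
    (hrep : ∀ n : ℕ, φ n = c + ∫ ω, f ω * z ω ^ n ∂ρ)
    (hint : Integrable (fun ω => ‖f ω‖ * (‖1 - z ω‖ / (1 - ‖z ω‖))) ρ) :
    MemC φ ∧
      traceNorm (hankelH φ) + traceNorm (hankelK φ) ≤
        ∫ ω, ‖f ω‖ * (‖1 - z ω‖ / (1 - ‖z ω‖)) ∂ρ := by
  have integrable_f : Integrable f ρ := hint.mono' hf <| hz1.mono fun ω hω =>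
    le_mul_of_one_le_right (norm_nonneg _) (one_le_norm_one_sub_div_one_sub_norm hω)
  have integrable_moment :=
    integrable_mul_pow_of_norm_le_one hz (hz1.mono fun _ hω => hω.le) integrable_f
  have sub_succ (n : ℕ) : φ n - φ (n + 1) = ∫ ω, f ω * (1 - z ω) * z ω ^ n ∂ρ := by
    rw [hrep, hrep, add_sub_add_left_eq_sub,
      ← integral_sub (integrable_moment n) (integrable_moment (n + 1))]
    congr! 2 with ω
    ring
  simp only [← mul_div_assoc, ← norm_mul] at hint ⊢
  exact memC_and_traceNorm_add_le_of_sub_succ_eq_integral hz hz1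
    (hf.mul (aestronglyMeasurable_const.sub hz)) hint sub_succ

end Hankel

/-- If `φ(n) = c + ∫_𝔻 sⁿ dν(s)` for a complex Borel measure `ν` on the open
unit disc (written in polar form `ν = f · ρ` with `ρ = |ν|` a finite Borel measure and `‖f‖ = 1`
a.e.) with `∫_𝔻 |1−s|/(1−|s|) d|ν|(s) < ∞`, then `φ ∈ 𝒞` and
`‖h_φ‖₁ + ‖k_φ‖₁ ≤ ∫_𝔻 |1−s|/(1−|s|) d|ν|(s)`. -/
theorem stmt0 (φ : ℕ → ℂ) (c : ℂ) (ρ : Measure (Metric.ball (0:ℂ) 1)) [IsFiniteMeasure ρ]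
    (f : Metric.ball (0:ℂ) 1 → ℂ)
    (hf : AEStronglyMeasurable f ρ)
    (hf1 : ∀ᵐ s ∂ρ, ‖f s‖ = 1)
    (hrep : ∀ n : ℕ, φ n = c + ∫ s, f s * (s : ℂ) ^ n ∂ρ)
    (hint : Integrable (fun s : Metric.ball (0:ℂ) 1 => ‖1 - (s : ℂ)‖ / (1 - ‖(s : ℂ)‖)) ρ) :
    MemC φ ∧
      traceNorm (hankelH φ) + traceNorm (hankelK φ) ≤
        ∫ s, ‖1 - (s : ℂ)‖ / (1 - ‖(s : ℂ)‖) ∂ρ := by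
  have density_mul : ∀ᵐ s ∂ρ, ‖f s‖ * (‖1 - (s : ℂ)‖ / (1 - ‖(s : ℂ)‖)) =
      ‖1 - (s : ℂ)‖ / (1 - ‖(s : ℂ)‖) := hf1.mono fun s hs => by rw [hs, one_mul]
  rw [← integral_congr_ae density_mul]
  exact stmt0_general continuous_subtype_val.aestronglyMeasurable
    (.of_forall fun s => mem_ball_zero_iff.1 s.2) hf hrep ((integrable_congr density_mul).2 hint)

end
end

section
/- Let φ : ℕ → ℂ belong to the class 𝒞. Then there exist a constant c ∈ ℂ and a complex Borel measure ν on the open unit disc 𝔻 such that φ(n) = c + ∫_𝔻 sⁿ dν(s) for all n ∈ ℕ, ∫_𝔻 |1−s|/(1−|s|) d|ν|(s) < ∞, and moreover |c| + ∫_𝔻 |1−s|/(1−|s|) d|ν|(s) ≤ (8/π)·‖φ‖_𝒞. -/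
open MeasureTheory Filter

noncomputable section

/-! Put `aₙ = φ(n) - φ(n+1)`. It suffices to represent `aₙ` as the moments of a measure with density
`g(s) · 2(1 - |s|)` with respect to `dr dθ`: dividing it by `1 - s` gives `ν`, and the weight
`|1 - s|/(1 - |s|)` turns `|ν|` into exactly `2|g| dr dθ`. Orthogonality of characters suggests
`g(s) = ∑ₙ (2n+1)(n+1) aₙ s̄ⁿ`. The factor `(2n+1)(n+1)` is the coefficient of `z²ⁿ` in `(1 - z)⁻³`,
the square of `(1 - z)^(-3/2)`. Splitting the latter into its even and odd parts exhibits `g` as a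
sum of two series, built from the matrices `a_{i+j} ωᵢ ωⱼ` and `a_{i+j+1} ω'ᵢ ω'ⱼ`. Expand `h_φ` and
`k_φ` into rank one matrices: each of these gives a product of two power series, whose `L¹` norm is
bounded by Cauchy–Schwarz and Parseval. Log-convexity of `Γ` gives `|ωᵢ|² ≤ (4/π)(2i + 1)` and
`|ω'ᵢ|² ≤ (4/π)(2i + 2)`, which is where the constant `8/π` comes from.
-/

section Multichoose

open Finset.HasAntidiagonal (antidiagonal mem_antidiagonal)

theorem multichoose_add {R : Type*} [CommRing R] [BinomialRing R] (r s : R) (n : ℕ) :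
    Ring.multichoose (r + s) n =
      ∑ p ∈ antidiagonal n, Ring.multichoose r p.1 * Ring.multichoose s p.2 := by
  have vandermonde := Ring.add_choose_eq n (Commute.all (-r) (-s))
  rw [← neg_add, Ring.choose_neg'] at vandermonde
  refine smul_left_cancel (n : ℤ).negOnePow ?_
  rw [vandermonde, Finset.smul_sum]
  refine Finset.sum_congr rfl fun p hp => ?_
  rw [Ring.choose_neg', Ring.choose_neg', smul_mul_smul_comm, ← Int.negOnePow_add,
    ← Nat.cast_add, mem_antidiagonal.mp hp]

theorem Gamma_add_natCast {r : ℝ} (hr : 0 < r) (n : ℕ) :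
    Real.Gamma (r + n) = Real.Gamma r * n.factorial * Ring.multichoose r n := by
  rw [mul_assoc, ← nsmul_eq_mul, Ring.factorial_nsmul_multichoose_eq_ascPochhammer,
    Polynomial.ascPochhammer_smeval_eq_eval]
  induction n with
  | zero => simp
  | succ n ih =>
    rw [Nat.cast_succ, ← add_assoc, Real.Gamma_add_one (by positivity), ih,
      ascPochhammer_succ_eval]
    ring

theorem multichoose_three (n : ℕ) :
    Ring.multichoose (3 : ℝ) n = (n + 1) * (n + 2) / 2 := by
  have gamma := Gamma_add_natCast (r := 3) (by norm_num) n
  have left : Real.Gamma (3 + n) = (n + 2) * ((n + 1) * n.factorial) := by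
    rw [show (3 + n : ℝ) = (n + 2 : ℕ) + 1 by push_cast; ring, Real.Gamma_nat_eq_factorial]
    push_cast [Nat.factorial_succ]
    ring
  rw [left, Real.Gamma_ofNat_eq_factorial] at gamma
  have : (n.factorial : ℝ) ≠ 0 := by positivity
  norm_num at gamma
  field_simp
  apply mul_left_cancel₀ this
  linear_combination -gamma

theorem Gamma_midpoint_sq_le {s t : ℝ} (hs : 0 < s) (ht : 0 < t) :
    Real.Gamma ((s + t) / 2) ^ 2 ≤ Real.Gamma s * Real.Gamma t := by
  have convexity := Real.Gamma_mul_add_mul_le_rpow_Gamma_mul_rpow_Gamma hs ht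
    one_half_pos one_half_pos (add_halves 1)
  rw [← Real.sqrt_eq_rpow, ← Real.sqrt_eq_rpow, ← Real.sqrt_mul (Real.Gamma_pos_of_pos hs).le]
    at convexity
  calc Real.Gamma ((s + t) / 2) ^ 2 = Real.Gamma (1 / 2 * s + 1 / 2 * t) ^ 2 := by ring_nf
    _ ≤ _ := (Real.le_sqrt' (Real.Gamma_pos_of_pos (by positivity))).mp convexity

theorem multichoose_three_halves_sq_le (n : ℕ) :
    Ring.multichoose (3 / 2 : ℝ) n ^ 2 ≤ 4 / Real.pi * (n + 1) := by
  have gamma := Gamma_add_natCast (r := 3 / 2) (by norm_num) n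
  have half : Real.Gamma (3 / 2) ^ 2 = Real.pi / 4 := by
    rw [show (3 / 2 : ℝ) = 1 / 2 + 1 by norm_num, Real.Gamma_add_one (by norm_num),
      Real.Gamma_one_half_eq, mul_pow, Real.sq_sqrt Real.pi_pos.le]
    ring
  have convexity := Gamma_midpoint_sq_le (s := n + 1) (t := (n + 1 : ℕ) + 1) (by positivity)
    (by positivity)
  rw [show ((n + 1 : ℝ) + ((n + 1 : ℕ) + 1)) / 2 = 3 / 2 + n by push_cast; ring, gamma,
    Real.Gamma_nat_eq_factorial, Real.Gamma_nat_eq_factorial, mul_pow, mul_pow, half,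
    Nat.factorial_succ] at convexity
  push_cast at convexity
  have : (0 : ℝ) < n.factorial ^ 2 := by positivity
  rw [div_mul_eq_mul_div, le_div_iff₀ Real.pi_pos]
  refine le_of_mul_le_mul_left ?_ this
  linarith

end Multichoose

section AntidiagonalParity

open Finset.HasAntidiagonal (antidiagonal mem_antidiagonal)

theorem sum_antidiagonal_two_mul_add_two {M : Type*} [AddCommMonoid M] (f : ℕ → ℕ → M) (n : ℕ) :
    ∑ p ∈ antidiagonal (2 * n + 2), f p.1 p.2 =
      ∑ p ∈ antidiagonal (n + 1), f (2 * p.1) (2 * p.2) +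
        ∑ p ∈ antidiagonal n, f (2 * p.1 + 1) (2 * p.2 + 1) := by
  rw [← Finset.sum_filter_add_sum_filter_not _ (fun p => Even p.1)]
  congr 1
  · refine Finset.sum_nbij' (fun p => (p.1 / 2, p.2 / 2)) (fun p => (2 * p.1, 2 * p.2))
      ?_ ?_ ?_ ?_ ?_
      <;> simp only [Finset.mem_filter, mem_antidiagonal, Nat.even_iff, Prod.forall, Prod.mk.injEq]
      <;> intros <;> first | omega | (congr 1 <;> omega)
  · refine Finset.sum_nbij' (fun p => (p.1 / 2, p.2 / 2)) (fun p => (2 * p.1 + 1, 2 * p.2 + 1))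
      ?_ ?_ ?_ ?_ ?_
      <;> simp only [Finset.mem_filter, mem_antidiagonal, Nat.even_iff, Prod.forall, Prod.mk.injEq]
      <;> intros <;> first | omega | (congr 1 <;> omega)

end AntidiagonalParity

section ConjugatePowerSeries

open Finset.HasAntidiagonal (antidiagonal mem_antidiagonal)
open ComplexConjugate

/-- Absolute convergence of the power series with coefficients `c` on the open unit disc. -/
def ConvergesOnDisc {E : Type*} [Norm E] (c : ℕ → E) : Prop :=
  ∀ r : ℝ, 0 ≤ r → r < 1 → Summable fun n => ‖c n‖ * r ^ n

namespace ConvergesOnDisc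

theorem of_norm_le {E F : Type*} [SeminormedAddCommGroup E] [Norm F] {c : ℕ → E} {d : ℕ → F}
    (hd : ConvergesOnDisc d) (hcd : ∀ n, ‖c n‖ ≤ ‖d n‖) : ConvergesOnDisc c := fun r hr₀ hr₁ =>
  (hd r hr₀ hr₁).of_nonneg_of_le (fun n => by positivity) fun n => by gcongr; exact hcd n

theorem bounded_mul {R : Type*} [SeminormedRing R] {b c : ℕ → R} (hc : ConvergesOnDisc c) {B : ℝ}
    (hb : ∀ n, ‖b n‖ ≤ B) : ConvergesOnDisc fun n => b n * c n := fun r hr₀ hr₁ =>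
  ((hc r hr₀ hr₁).mul_left B).of_nonneg_of_le (fun n => by positivity) fun n => by
    rw [← mul_assoc]
    gcongr
    exact (norm_mul_le _ _).trans (by gcongr; exact hb n)

theorem of_norm_le_pow {E : Type*} [SeminormedAddCommGroup E] {c : ℕ → E} (C : ℝ) (k : ℕ)
    (hc : ∀ n, ‖c n‖ ≤ C * ((n : ℝ) + 1) ^ k) : ConvergesOnDisc c := fun r hr₀ hr₁ => by
  have growth : (fun n : ℕ => (((n + 1) ^ k : ℕ) : ℝ)) =O[atTop] fun n => ((n ^ k : ℕ) : ℝ) := by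
    refine Asymptotics.IsBigO.of_bound (2 ^ k) ((eventually_ge_atTop 1).mono fun n hn => ?_)
    have : (1 : ℝ) ≤ n := mod_cast hn
    simp only [Nat.cast_pow, Nat.cast_add, Nat.cast_one, norm_pow, ← mul_pow]
    gcongr
    rw [Real.norm_of_nonneg (by positivity), Real.norm_of_nonneg (by positivity)]
    linarith
  have summable := summable_norm_mul_geometric_of_norm_lt_one (r := r)
    (by rwa [Real.norm_of_nonneg hr₀]) growth
  refine (summable.mul_left C).of_nonneg_of_le (fun n => by positivity) fun n => ?_
  rw [Real.norm_of_nonneg (by positivity), ← mul_assoc]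
  gcongr
  exact_mod_cast hc n

theorem sum_antidiagonal {R : Type*} [SeminormedRing R] {c d : ℕ → R} (hc : ConvergesOnDisc c)
    (hd : ConvergesOnDisc d) :
    ConvergesOnDisc fun n => ∑ p ∈ antidiagonal n, ‖c p.1‖ * ‖d p.2‖ := fun r hr₀ hr₁ => by
  refine (summable_norm_sum_mul_antidiagonal_of_summable_norm (hc r hr₀ hr₁).norm
    (hd r hr₀ hr₁).norm).congr fun n => ?_
  rw [← Real.norm_of_nonneg (pow_nonneg hr₀ n), ← norm_mul, Finset.sum_mul]
  congr 1
  refine Finset.sum_congr rfl fun p hp => ?_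
  rw [← mem_antidiagonal.mp hp, pow_add]
  ring

theorem summable_norm {c : ℕ → ℂ} (hc : ConvergesOnDisc c) {s : ℂ} (hs : ‖s‖ < 1) :
    Summable fun n => ‖c n * conj s ^ n‖ := by
  simpa only [norm_mul, norm_pow, RCLike.norm_conj] using hc ‖s‖ (norm_nonneg s) hs

end ConvergesOnDisc

/-- The power series with coefficients `c` in the conjugate variable: `∑ₙ cₙ s̄ⁿ`. -/
def conjSeries (c : ℕ → ℂ) (s : ℂ) : ℂ := ∑' n, c n * conj s ^ n

@[fun_prop]
theorem measurable_conjSeries (c : ℕ → ℂ) : Measurable (conjSeries c) :=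
  Measurable.tsum fun n =>
    (Complex.continuous_conj.measurable.pow_const n).const_mul (c n)

theorem conjSeries_mul {c d : ℕ → ℂ} (hc : ConvergesOnDisc c) (hd : ConvergesOnDisc d) {s : ℂ}
    (hs : ‖s‖ < 1) :
    conjSeries c s * conjSeries d s =
      ∑' n, (∑ p ∈ antidiagonal n, c p.1 * d p.2) * conj s ^ n := by
  rw [conjSeries, conjSeries, tsum_mul_tsum_eq_tsum_sum_antidiagonal_of_summable_norm
    (hc.summable_norm hs) (hd.summable_norm hs)]
  refine tsum_congr fun n => ?_
  rw [Finset.sum_mul]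
  refine Finset.sum_congr rfl fun p hp => ?_
  rw [← mem_antidiagonal.mp hp, pow_add]
  ring

end ConjugatePowerSeries

section Circle

open ComplexConjugate AddCircle

variable {T : ℝ} [Fact (0 < T)]

theorem integral_conj_toCircle_pow_mul_toCircle_pow (n m : ℕ) :
    ∫ θ : AddCircle T, conj (toCircle θ : ℂ) ^ n * (toCircle θ : ℂ) ^ m ∂haarAddCircle =
      if n = m then 1 else 0 := by
  have coeff := congrFun (fourierCoeff_fourier (T := T) m) n
  simpa [fourierCoeff, toCircle_neg, toCircle_nsmul, Pi.single_apply, ← Circle.coe_inv_eq_conj]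
    using coeff

theorem integral_conjSeries_mul_toCircle_pow {c : ℕ → ℂ} (hc : Summable fun n => ‖c n‖) (m : ℕ) :
    ∫ θ : AddCircle T, conjSeries c (toCircle θ) * (toCircle θ : ℂ) ^ m ∂haarAddCircle = c m := by
  have integrable (n : ℕ) : Integrable (fun θ : AddCircle T =>
      c n * (conj (toCircle θ : ℂ) ^ n * (toCircle θ : ℂ) ^ m)) haarAddCircle :=
    Continuous.integrable_of_hasCompactSupport (by fun_prop) (HasCompactSupport.of_compactSpace _)
  have termwise := integral_tsum_of_summable_integral_norm integrable
    (by simpa [Circle.norm_coe] using hc)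
  simp only [conjSeries, ← tsum_mul_right, mul_assoc]
  rw [← termwise, tsum_eq_single m]
  · simp [integral_const_mul, integral_conj_toCircle_pow_mul_toCircle_pow]
  · intro n hn
    simp [integral_const_mul, integral_conj_toCircle_pow_mul_toCircle_pow, hn]

theorem norm_conjSeries_le {c : ℕ → ℂ} (hc : Summable fun n => ‖c n‖) {s : ℂ} (hs : ‖s‖ ≤ 1) :
    ‖conjSeries c s‖ ≤ ∑' n, ‖c n‖ :=
  tsum_of_norm_bounded hc.hasSum fun n => by
    rw [norm_mul, norm_pow, RCLike.norm_conj]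
    exact mul_le_of_le_one_right (norm_nonneg _) (pow_le_one₀ (norm_nonneg _) hs)

theorem hasSum_integral_norm_sq_conjSeries_toCircle {c : ℕ → ℂ} (hc : Summable fun n => ‖c n‖) :
    HasSum (fun n => ‖c n‖ ^ 2)
      (∫ θ : AddCircle T, ‖conjSeries c (toCircle θ)‖ ^ 2 ∂haarAddCircle) := by
  have bound (θ : AddCircle T) : ‖conjSeries c (toCircle θ)‖ ≤ ∑' n, ‖c n‖ :=
    norm_conjSeries_le hc (Circle.norm_coe _).le
  let term (n : ℕ) (θ : AddCircle T) : ℂ :=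
    conjSeries c (toCircle θ) * (conj (c n) * (toCircle θ : ℂ) ^ n)
  have norm_term (n : ℕ) (θ : AddCircle T) : ‖term n θ‖ ≤ (∑' k, ‖c k‖) * ‖c n‖ := by
    simp only [term, norm_mul, norm_pow, Circle.norm_coe, one_pow, mul_one, RCLike.norm_conj]
    gcongr
    exact bound θ
  have measurable (n : ℕ) : Measurable (term n) := by fun_prop
  have integrable (n : ℕ) : Integrable (term n) haarAddCircle :=
    .of_bound (measurable n).aestronglyMeasurable _ (.of_forall (norm_term n))
  have expand (θ : AddCircle T) : ((‖conjSeries c (toCircle θ)‖ ^ 2 : ℝ) : ℂ) = ∑' n, term n θ := by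
    rw [tsum_mul_left, Complex.ofReal_pow, ← Complex.mul_conj', conjSeries, Complex.conj_tsum]
    simp
  have summable : Summable fun n => ∫ θ, ‖term n θ‖ ∂haarAddCircle := by
    refine (hc.mul_left (∑' k, ‖c k‖)).of_nonneg_of_le (fun n => by positivity) fun n => ?_
    simpa using integral_mono (integrable n).norm (integrable_const _) (norm_term n)
  have integral_term (n : ℕ) : ∫ θ, term n θ ∂haarAddCircle = ((‖c n‖ ^ 2 : ℝ) : ℂ) := by
    simp only [term, mul_left_comm _ (conj (c n)), integral_const_mul,
      integral_conjSeries_mul_toCircle_pow hc, Complex.conj_mul', Complex.ofReal_pow]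
  rw [← Complex.hasSum_ofReal, ← integral_complex_ofReal]
  simpa only [expand, integral_term] using
    hasSum_integral_of_summable_integral_norm integrable summable

theorem lintegral_enorm_sq_conjSeries_toCircle {c : ℕ → ℂ} (hc : Summable fun n => ‖c n‖) :
    ∫⁻ θ : AddCircle T, ‖conjSeries c (toCircle θ)‖ₑ ^ 2 ∂haarAddCircle = ∑' n, ‖c n‖ₑ ^ 2 := by
  have bound (θ : AddCircle T) : ‖‖conjSeries c (toCircle θ)‖ ^ 2‖ ≤ (∑' n, ‖c n‖) ^ 2 := by
    rw [norm_pow, norm_norm]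
    gcongr
    exact norm_conjSeries_le hc (Circle.norm_coe θ.toCircle).le
  have measurable : Measurable fun θ : AddCircle T => ‖conjSeries c (toCircle θ)‖ ^ 2 := by fun_prop
  have integrable : Integrable (fun θ : AddCircle T => ‖conjSeries c (toCircle θ)‖ ^ 2)
      haarAddCircle := .of_bound measurable.aestronglyMeasurable _ (.of_forall bound)
  have parseval := hasSum_integral_norm_sq_conjSeries_toCircle (T := T) hc
  have parseval_ofReal := congrArg ENNReal.ofReal parseval.tsum_eq.symm
  rw [ofReal_integral_eq_lintegral_ofReal integrable (.of_forall fun θ => by positivity),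
    ENNReal.ofReal_tsum_of_nonneg (fun n => by positivity) parseval.summable] at parseval_ofReal
  simpa only [ENNReal.ofReal_pow (norm_nonneg _), ofReal_norm] using parseval_ofReal

end Circle

section RadialMeasure

open AddCircle

/-- The open unit disc, as a set to be used as a type. -/
abbrev Disc : Set ℂ := Metric.ball 0 1

theorem Disc.norm_lt_one (s : Disc) : ‖(s : ℂ)‖ < 1 := mem_ball_zero_iff.mp s.2

/-- Polar coordinates on the punctured open unit disc. -/
def polarMap (p : Set.Ioo (0 : ℝ) 1 × UnitAddCircle) : Disc :=
  ⟨(p.1 : ℝ) * toCircle p.2, by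
    simpa [Circle.norm_coe, abs_of_pos p.1.2.1] using p.1.2.2⟩

@[fun_prop]
theorem measurable_polarMap : Measurable polarMap := by
  refine Measurable.subtype_mk (Continuous.measurable ?_)
  fun_prop

theorem norm_polarMap (r : Set.Ioo (0 : ℝ) 1) (θ : UnitAddCircle) :
    ‖(polarMap (r, θ) : ℂ)‖ = r := by
  simp [polarMap, Circle.norm_coe, abs_of_pos r.2.1]

theorem conjSeries_polarMap (c : ℕ → ℂ) (r : Set.Ioo (0 : ℝ) 1) (θ : UnitAddCircle) :
    conjSeries c (polarMap (r, θ)) = conjSeries (fun n => c n * (r : ℝ) ^ n) (toCircle θ) := by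
  simp only [conjSeries, polarMap, map_mul, Complex.conj_ofReal, mul_pow, mul_assoc]

theorem ConvergesOnDisc.summable_norm_mul_pow {c : ℕ → ℂ} (hc : ConvergesOnDisc c)
    (r : Set.Ioo (0 : ℝ) 1) : Summable fun n => ‖c n * ((r : ℝ) : ℂ) ^ n‖ := by
  simpa [abs_of_pos r.2.1] using hc r r.2.1.le r.2.2

/-- The rotation invariant measure on the disc with radial part `σ`: the image of the product of
`σ` and the normalized arc length under polar coordinates. -/
def radialMeasure (σ : Measure (Set.Ioo (0 : ℝ) 1)) : Measure Disc :=
  (σ.prod haarAddCircle).map polarMap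

variable (σ : Measure (Set.Ioo (0 : ℝ) 1))

theorem lintegral_radialMeasure {F : Disc → ENNReal} (hF : Measurable F) :
    ∫⁻ s, F s ∂radialMeasure σ = ∫⁻ r, ∫⁻ θ, F (polarMap (r, θ)) ∂haarAddCircle ∂σ := by
  rw [radialMeasure, lintegral_map hF measurable_polarMap,
    lintegral_prod (fun p => F (polarMap p)) (by fun_prop)]

theorem lintegral_radialMeasure_withDensity {w : ℝ → ENNReal} (hw : Measurable w)
    {F : Disc → ENNReal} (hF : Measurable F) :
    ∫⁻ s, F s ∂radialMeasure (σ.withDensity fun r => w r) =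
      ∫⁻ s, w ‖(s : ℂ)‖ * F s ∂radialMeasure σ := by
  rw [lintegral_radialMeasure _ hF, lintegral_radialMeasure _ (by fun_prop),
    lintegral_withDensity_eq_lintegral_mul _ (by fun_prop) (by fun_prop)]
  simp only [Pi.mul_apply, norm_polarMap]
  exact lintegral_congr fun r => (lintegral_const_mul _ (by fun_prop)).symm

theorem lintegral_enorm_sq_conjSeries {c : ℕ → ℂ} (hc : ConvergesOnDisc c) :
    ∫⁻ s, ‖conjSeries c (s : ℂ)‖ₑ ^ 2 ∂radialMeasure σ =
      ∑' n, ‖c n‖ₑ ^ 2 * ∫⁻ r, ‖(r : ℝ)‖ₑ ^ (2 * n) ∂σ := by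
  rw [lintegral_radialMeasure σ (by fun_prop)]
  calc ∫⁻ r, ∫⁻ θ, ‖conjSeries c (polarMap (r, θ))‖ₑ ^ 2 ∂haarAddCircle ∂σ
      = ∫⁻ r, ∑' n, ‖c n‖ₑ ^ 2 * ‖(r : ℝ)‖ₑ ^ (2 * n) ∂σ := lintegral_congr fun r => by
        simp only [conjSeries_polarMap,
          lintegral_enorm_sq_conjSeries_toCircle (hc.summable_norm_mul_pow r)]
        simp [enorm_eq_nnnorm, mul_pow, ← pow_mul, mul_comm 2]
    _ = ∑' n, ∫⁻ r, ‖c n‖ₑ ^ 2 * ‖(r : ℝ)‖ₑ ^ (2 * n) ∂σ := lintegral_tsum fun n => by fun_prop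
    _ = _ := tsum_congr fun n => lintegral_const_mul _ (by fun_prop)

theorem integral_conjSeries_mul_pow [SFinite σ] {c : ℕ → ℂ} (hc : ConvergesOnDisc c)
    (w : ℝ → ℂ) (m : ℕ)
    (integrable : Integrable
      (fun s : Disc => conjSeries c s * (s : ℂ) ^ m * w ‖(s : ℂ)‖) (radialMeasure σ)) :
    ∫ s, conjSeries c (s : ℂ) * (s : ℂ) ^ m * w ‖(s : ℂ)‖ ∂radialMeasure σ =
      c m * ∫ r, ((r : ℝ) : ℂ) ^ (2 * m) * w r ∂σ := by
  rw [radialMeasure] at integrable ⊢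
  have integrable_prod := integrable.comp_measurable measurable_polarMap
  simp only [Function.comp_def] at integrable_prod
  rw [integral_map measurable_polarMap.aemeasurable integrable.aestronglyMeasurable,
    integral_prod _ integrable_prod, ← integral_const_mul]
  refine integral_congr_ae (.of_forall fun r => ?_)
  have circle := integral_conjSeries_mul_toCircle_pow (T := 1) (hc.summable_norm_mul_pow r) m
  calc ∫ θ, conjSeries c (polarMap (r, θ)) * (polarMap (r, θ) : ℂ) ^ m *
          w ‖(polarMap (r, θ) : ℂ)‖ ∂haarAddCircle
      = ∫ θ, ((r : ℝ) : ℂ) ^ m * w r *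
          (conjSeries (fun n => c n * (r : ℝ) ^ n) (toCircle θ) * (toCircle θ : ℂ) ^ m)
          ∂haarAddCircle := integral_congr_ae (.of_forall fun θ => by
        simp only [norm_polarMap, conjSeries_polarMap]
        simp only [polarMap, mul_pow]
        ring)
    _ = c m * (((r : ℝ) : ℂ) ^ (2 * m) * w r) := by
        rw [integral_const_mul, circle]
        ring

end RadialMeasure

section CauchySchwarz

theorem lintegral_enorm_mul_le_of_lintegral_enorm_sq_le {α : Type*} [MeasurableSpace α]
    {μ : Measure α} {f g : α → ℂ} (hf : Measurable f) (hg : Measurable g) {C a b : ENNReal}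
    (hfa : ∫⁻ s, ‖f s‖ₑ ^ 2 ∂μ ≤ C * a ^ 2) (hgb : ∫⁻ s, ‖g s‖ₑ ^ 2 ∂μ ≤ C * b ^ 2) :
    ∫⁻ s, ‖f s * g s‖ₑ ∂μ ≤ C * (a * b) := by
  have sqrt_bound (t : ENNReal) : (C * t ^ 2) ^ (1 / 2 : ℝ) = C ^ (1 / 2 : ℝ) * t := by
    rw [ENNReal.mul_rpow_of_nonneg _ _ (by norm_num), ← ENNReal.rpow_natCast_mul]
    norm_num
  calc ∫⁻ s, ‖f s * g s‖ₑ ∂μ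
      ≤ (∫⁻ s, ‖f s‖ₑ ^ (2 : ℝ) ∂μ) ^ (1 / 2 : ℝ) * (∫⁻ s, ‖g s‖ₑ ^ (2 : ℝ) ∂μ) ^ (1 / 2 : ℝ) := by
        simp only [enorm_mul]
        exact ENNReal.lintegral_mul_le_Lp_mul_Lq μ Real.HolderConjugate.two_two
          hf.enorm.aemeasurable hg.enorm.aemeasurable
    _ ≤ (C * a ^ 2) ^ (1 / 2 : ℝ) * (C * b ^ 2) ^ (1 / 2 : ℝ) := by
        simp only [ENNReal.rpow_two]
        gcongr
    _ = (C ^ (1 / 2 : ℝ) * C ^ (1 / 2 : ℝ)) * (a * b) := by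
        rw [sqrt_bound, sqrt_bound]
        ring
    _ = C * (a * b) := by
        rw [← ENNReal.rpow_add_of_nonneg _ _ (by norm_num) (by norm_num)]
        norm_num

end CauchySchwarz

section TraceClass

open ComplexConjugate

/-- `h i j = ∑ₖ xₖ(i) · zₖ(j)` with `∑ₖ ‖xₖ‖·‖zₖ‖ < ∞`. The conjugation in `IsTraceClass` is
absorbed into `zₖ = conj yₖ`, so that each term pairs with a product of two `conjSeries`. -/
structure IsTraceExpansion (h : ℕ → ℕ → ℂ) (x z : ℕ → ell2) : Prop where
  summable : Summable fun k => ‖x k‖ * ‖z k‖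
  eq_tsum : ∀ i j, h i j = ∑' k, (x k : ℕ → ℂ) i * (z k : ℕ → ℂ) j

theorem tsum_enorm_sq_ell2 (x : ell2) : ∑' i, ‖(x : ℕ → ℂ) i‖ₑ ^ 2 = ‖x‖ₑ ^ 2 := by
  have hasSum := lp.hasSum_norm (p := 2) (by norm_num) x
  simp only [ENNReal.toReal_ofNat, Real.rpow_two] at hasSum
  have ofReal := congrArg ENNReal.ofReal hasSum.tsum_eq
  rw [ENNReal.ofReal_tsum_of_nonneg (fun i => by positivity) hasSum.summable] at ofReal
  simpa only [ENNReal.ofReal_pow (norm_nonneg _), ofReal_norm] using ofReal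

theorem norm_apply_le_norm_ell2 (x : ell2) (i : ℕ) : ‖(x : ℕ → ℂ) i‖ ≤ ‖x‖ :=
  lp.norm_apply_le_norm two_ne_zero x i

theorem norm_mul_mul_mul_le_ell2 (x z : ell2) (ω : ℕ → ℂ) (i j : ℕ) :
    ‖x i * ω i * (z j * ω j)‖ ≤ ‖x‖ * ‖z‖ * (‖ω i‖ * ‖ω j‖) := by
  rw [mul_mul_mul_comm, norm_mul, norm_mul, norm_mul]
  gcongr <;> exact norm_apply_le_norm_ell2 _ _

namespace IsTraceExpansion

variable {h : ℕ → ℕ → ℂ} {x z : ℕ → ell2}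

theorem of_conj {y : ℕ → ell2} (summable : Summable fun k => ‖x k‖ * ‖y k‖)
    (eq_tsum : ∀ i j, h i j = ∑' k, (x k : ℕ → ℂ) i * conj ((y k : ℕ → ℂ) j)) :
    IsTraceExpansion h x fun k => star (y k) where
  summable := by simpa only [norm_star] using summable
  eq_tsum := by simpa only [lp.star_apply, starRingEnd_apply] using eq_tsum

theorem summable_mul (hxz : IsTraceExpansion h x z) (i j : ℕ) :
    Summable fun k => (x k : ℕ → ℂ) i * (z k : ℕ → ℂ) j :=
  hxz.summable.of_norm_bounded fun k => by
    rw [norm_mul]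
    gcongr <;> exact norm_apply_le_norm_ell2 _ _

theorem norm_le (hxz : IsTraceExpansion h x z) (i j : ℕ) : ‖h i j‖ ≤ ∑' k, ‖x k‖ * ‖z k‖ := by
  rw [hxz.eq_tsum]
  refine tsum_of_norm_bounded hxz.summable.hasSum fun k => ?_
  rw [norm_mul]
  gcongr <;> exact norm_apply_le_norm_ell2 _ _

end IsTraceExpansion

theorem IsTraceClass.exists_expansion {h : ℕ → ℕ → ℂ} (hh : IsTraceClass h) :
    ∃ x z, IsTraceExpansion h x z :=
  let ⟨x, _, summable, eq_tsum⟩ := hh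
  ⟨x, _, .of_conj summable eq_tsum⟩

theorem IsTraceClass.exists_norm_le {h : ℕ → ℕ → ℂ} (hh : IsTraceClass h) :
    ∃ B, ∀ i j, ‖h i j‖ ≤ B :=
  let ⟨_, _, expansion⟩ := hh.exists_expansion
  ⟨_, expansion.norm_le⟩

theorem traceNorm_nonneg (h : ℕ → ℕ → ℂ) : 0 ≤ traceNorm h := by
  refine Real.sInf_nonneg ?_
  rintro _ ⟨x, y, -, -, rfl⟩
  exact tsum_nonneg fun k => by positivity

theorem IsTraceClass.le_mul_traceNorm {h : ℕ → ℕ → ℂ} (hh : IsTraceClass h) {C I : ENNReal}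
    (hC : C ≠ ⊤) (hI : ∀ x z, IsTraceExpansion h x z → I ≤ C * ∑' k, ‖x k‖ₑ * ‖z k‖ₑ) :
    I ≤ C * ENNReal.ofReal (traceNorm h) := by
  have continuous : Continuous fun t : ℝ => C * ENNReal.ofReal t :=
    (ENNReal.continuous_const_mul hC).comp ENNReal.continuous_ofReal
  refine ge_of_tendsto (continuous.continuousWithinAt (s := Set.Ioi (traceNorm h)))
    (eventually_mem_nhdsWithin.mono fun t ht => ?_)
  obtain ⟨x₀, y₀, summable₀, eq_tsum₀⟩ := hh
  rw [Set.mem_Ioi, traceNorm] at ht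
  obtain ⟨_, ⟨x, y, summable, eq_tsum, rfl⟩, lt⟩ :=
    exists_lt_of_csInf_lt (by exact ⟨_, x₀, y₀, summable₀, eq_tsum₀, rfl⟩) ht
  calc I ≤ C * ∑' k, ‖x k‖ₑ * ‖star (y k)‖ₑ := hI _ _ (.of_conj summable eq_tsum)
    _ = C * ENNReal.ofReal (∑' k, ‖x k‖ * ‖y k‖) := by
        simp only [ENNReal.ofReal_tsum_of_nonneg (fun k => by positivity) summable,
          ENNReal.ofReal_mul (norm_nonneg _), ← ofReal_norm, norm_star]
    _ ≤ C * ENNReal.ofReal t := by gcongr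

end TraceClass

section HankelBound

open Finset.HasAntidiagonal (antidiagonal mem_antidiagonal)
open ComplexConjugate

theorem tsum_conjSeries_mul_conjSeries {b : ℕ → ℂ} {x z : ℕ → ell2}
    (hxz : IsTraceExpansion (fun i j => b (i + j)) x z) {ω : ℕ → ℂ} (hω : ConvergesOnDisc ω)
    {s : ℂ} (hs : ‖s‖ < 1) :
    ∑' k, conjSeries (fun i => x k i * ω i) s * conjSeries (fun i => z k i * ω i) s =
      conjSeries (fun n => b n * ∑ p ∈ antidiagonal n, ω p.1 * ω p.2) s := by
  have converges (u : ell2) : ConvergesOnDisc fun i => u i * ω i :=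
    hω.bounded_mul (norm_apply_le_norm_ell2 u)
  let term (k n : ℕ) : ℂ :=
    (∑ p ∈ antidiagonal n, x k p.1 * ω p.1 * (z k p.2 * ω p.2)) * conj s ^ n
  have norm_term (k n : ℕ) : ‖term k n‖ ≤ ‖x k‖ * ‖z k‖ *
      (‖∑ p ∈ antidiagonal n, ‖ω p.1‖ * ‖ω p.2‖‖ * ‖s‖ ^ n) := by
    rw [norm_mul, norm_pow, RCLike.norm_conj, ← mul_assoc, Real.norm_of_nonneg (by positivity),
      Finset.mul_sum]
    gcongr
    exact norm_sum_le_of_le _ fun p _ => norm_mul_mul_mul_le_ell2 (x k) (z k) ω p.1 p.2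
  have summable : Summable (Function.uncurry term) :=
    (hxz.summable.mul_of_nonneg (hω.sum_antidiagonal hω ‖s‖ (norm_nonneg s) hs)
      (fun k => by positivity) (fun n => by positivity)).of_norm_bounded fun p => norm_term p.1 p.2
  calc ∑' k, conjSeries (fun i => x k i * ω i) s * conjSeries (fun i => z k i * ω i) s
      = ∑' k, ∑' n, term k n :=
        tsum_congr fun k => conjSeries_mul (converges (x k)) (converges (z k)) hs
    _ = ∑' n, ∑' k, term k n := summable.tsum_comm.symm
    _ = ∑' n, (b n * ∑ p ∈ antidiagonal n, ω p.1 * ω p.2) * conj s ^ n := tsum_congr fun n => by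
        rw [tsum_mul_right, Summable.tsum_finsetSum]
        · congr 1
          rw [Finset.mul_sum]
          refine Finset.sum_congr rfl fun p hp => ?_
          rw [← mem_antidiagonal.mp hp, hxz.eq_tsum, ← tsum_mul_right]
          exact tsum_congr fun k => by ring
        · intro p _
          exact ((hxz.summable_mul p.1 p.2).mul_right (ω p.1 * ω p.2)).congr fun k => by ring

theorem lintegral_enorm_sq_conjSeries_mul_le {σ : Measure (Set.Ioo (0 : ℝ) 1)} {ω : ℕ → ℂ}
    (hω : ConvergesOnDisc ω) {C : ENNReal}
    (hC : ∀ i, ‖ω i‖ₑ ^ 2 * ∫⁻ r, ‖(r : ℝ)‖ₑ ^ (2 * i) ∂σ ≤ C) (x : ell2) :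
    ∫⁻ s, ‖conjSeries (fun i => x i * ω i) (s : ℂ)‖ₑ ^ 2 ∂radialMeasure σ ≤ C * ‖x‖ₑ ^ 2 := by
  rw [lintegral_enorm_sq_conjSeries σ (hω.bounded_mul (norm_apply_le_norm_ell2 x)),
    ← tsum_enorm_sq_ell2, ← ENNReal.tsum_mul_left]
  refine ENNReal.tsum_le_tsum fun i => ?_
  rw [enorm_mul, mul_pow, mul_assoc, mul_comm C]
  gcongr
  exact hC i

theorem lintegral_enorm_conjSeries_hankel_le {σ : Measure (Set.Ioo (0 : ℝ) 1)} {ω : ℕ → ℂ}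
    (hω : ConvergesOnDisc ω) {C : ENNReal} (hC_ne_top : C ≠ ⊤)
    (hC : ∀ i, ‖ω i‖ₑ ^ 2 * ∫⁻ r, ‖(r : ℝ)‖ₑ ^ (2 * i) ∂σ ≤ C) {b : ℕ → ℂ}
    (hb : IsTraceClass fun i j => b (i + j)) :
    ∫⁻ s, ‖conjSeries (fun n => b n * ∑ p ∈ antidiagonal n, ω p.1 * ω p.2) (s : ℂ)‖ₑ
        ∂radialMeasure σ ≤
      C * ENNReal.ofReal (traceNorm fun i j => b (i + j)) := by
  refine hb.le_mul_traceNorm hC_ne_top fun x z hxz => ?_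
  simp only [← tsum_conjSeries_mul_conjSeries hxz hω (Disc.norm_lt_one _)]
  calc ∫⁻ s : Disc, ‖∑' k, conjSeries (fun i => x k i * ω i) s *
          conjSeries (fun i => z k i * ω i) s‖ₑ ∂radialMeasure σ
      ≤ ∫⁻ s : Disc, ∑' k, ‖conjSeries (fun i => x k i * ω i) s *
          conjSeries (fun i => z k i * ω i) s‖ₑ ∂radialMeasure σ :=
        lintegral_mono fun s => enorm_tsum_le_tsum_enorm
    _ = ∑' k, ∫⁻ s : Disc, ‖conjSeries (fun i => x k i * ω i) s *
          conjSeries (fun i => z k i * ω i) s‖ₑ ∂radialMeasure σ :=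
        lintegral_tsum fun k => by fun_prop
    _ ≤ ∑' k, C * (‖x k‖ₑ * ‖z k‖ₑ) := ENNReal.tsum_le_tsum fun k =>
        lintegral_enorm_mul_le_of_lintegral_enorm_sq_le (by fun_prop) (by fun_prop)
          (lintegral_enorm_sq_conjSeries_mul_le hω hC (x k))
          (lintegral_enorm_sq_conjSeries_mul_le hω hC (z k))
    _ = C * ∑' k, ‖x k‖ₑ * ‖z k‖ₑ := ENNReal.tsum_mul_left

end HankelBound

section BinomialWeight

open Finset.HasAntidiagonal (antidiagonal)

/-- The uniform distribution of radii on `(0, 1)`. Its `radialMeasure` is `dr dθ`, with `θ` of total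
mass one. -/
def uniformRadius : Measure (Set.Ioo (0 : ℝ) 1) := volume.comap Subtype.val

instance : IsFiniteMeasure uniformRadius where
  measure_univ_lt_top := by
    rw [uniformRadius, comap_subtype_coe_apply measurableSet_Ioo, Set.image_univ, Subtype.range_coe]
    exact measure_Ioo_lt_top

theorem lintegral_enorm_pow_uniformRadius (k : ℕ) :
    ∫⁻ r, ‖(r : ℝ)‖ₑ ^ k ∂uniformRadius = ENNReal.ofReal (1 / (k + 1)) := by
  have integrable : IntegrableOn (fun r : ℝ => r ^ k) (Set.Ioo 0 1) :=
    ((continuous_pow k).integrableOn_Icc).mono_set Set.Ioo_subset_Icc_self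
  have integral : ∫ r in Set.Ioo (0 : ℝ) 1, r ^ k = 1 / (k + 1) := by
    rw [← integral_Ioc_eq_integral_Ioo, ← intervalIntegral.integral_of_le zero_le_one, integral_pow]
    simp
  rw [uniformRadius, lintegral_subtype_comap measurableSet_Ioo fun r : ℝ => ‖r‖ₑ ^ k, ← integral,
    ofReal_integral_eq_lintegral_ofReal integrable
      (ae_restrict_of_forall_mem measurableSet_Ioo fun r hr => pow_nonneg hr.1.le k)]
  refine setLIntegral_congr_fun measurableSet_Ioo fun r hr => ?_
  simp only [ENNReal.ofReal_pow hr.1.le, Real.enorm_of_nonneg hr.1.le]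

theorem integral_ofReal_pow_uniformRadius (k : ℕ) :
    ∫ r, ((r : ℝ) : ℂ) ^ k ∂uniformRadius = 1 / (k + 1) := by
  rw [uniformRadius, integral_subtype_comap measurableSet_Ioo fun r : ℝ => (r : ℂ) ^ k,
    ← integral_Ioc_eq_integral_Ioo, ← intervalIntegral.integral_of_le zero_le_one]
  simp only [← Complex.ofReal_pow, intervalIntegral.integral_ofReal, integral_pow]
  simp

/-- The coefficients of the part of parity `ε ∈ {0, 1}` of the power series of `(1 - z) ^ (-3/2)`:
the coefficient of `z ^ (2 * i + ε)`. -/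
def binomialWeight (ε i : ℕ) : ℂ := (Ring.multichoose (3 / 2 : ℝ) (2 * i + ε) : ℝ)

theorem norm_binomialWeight_sq_le (ε i : ℕ) :
    ‖binomialWeight ε i‖ ^ 2 ≤ 4 / Real.pi * ((2 * i + ε : ℕ) + 1) := by
  rw [binomialWeight, Complex.norm_real, Real.norm_eq_abs, sq_abs]
  exact multichoose_three_halves_sq_le _

theorem convergesOnDisc_binomialWeight (ε : ℕ) : ConvergesOnDisc (binomialWeight ε) := by
  refine .of_norm_le_pow (1 + 4 / Real.pi * (ε + 2)) 1 fun i => ?_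
  have linear : ((2 * i + ε : ℕ) : ℝ) + 1 ≤ (ε + 2) * (i + 1) := by
    push_cast
    nlinarith [mul_nonneg (Nat.cast_nonneg (α := ℝ) ε) (Nat.cast_nonneg (α := ℝ) i)]
  calc ‖binomialWeight ε i‖ ≤ 1 + ‖binomialWeight ε i‖ ^ 2 := by
        nlinarith [sq_nonneg (‖binomialWeight ε i‖ - 1)]
    _ ≤ 1 * (i + 1) + 4 / Real.pi * ((ε + 2) * (i + 1)) := by
        gcongr
        · simp
        · exact (norm_binomialWeight_sq_le ε i).trans (by gcongr)
    _ = (1 + 4 / Real.pi * (ε + 2)) * ((i : ℝ) + 1) ^ 1 := by ring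

theorem enorm_binomialWeight_sq_mul_lintegral_le (ε i : ℕ) :
    ‖binomialWeight ε i‖ₑ ^ 2 *
        ∫⁻ r, ‖(r : ℝ)‖ₑ ^ (2 * i) ∂uniformRadius.withDensity (fun r => ‖(r : ℝ)‖ₑ ^ ε) ≤
      ENNReal.ofReal (4 / Real.pi) := by
  rw [lintegral_withDensity_eq_lintegral_mul _ (by fun_prop) (by fun_prop)]
  simp only [Pi.mul_apply, ← pow_add]
  rw [lintegral_enorm_pow_uniformRadius, ← ofReal_norm, ← ENNReal.ofReal_pow (norm_nonneg _),
    ← ENNReal.ofReal_mul (by positivity), add_comm ε]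
  refine ENNReal.ofReal_le_ofReal ?_
  rw [mul_one_div, div_le_iff₀ (by positivity)]
  exact norm_binomialWeight_sq_le ε i

/-- The coefficients of the square of the power series `∑ᵢ binomialWeight ε i * z ^ i`. -/
def binomialWeightSq (ε n : ℕ) : ℂ :=
  ∑ p ∈ antidiagonal n, binomialWeight ε p.1 * binomialWeight ε p.2

theorem convergesOnDisc_binomialWeightSq (ε : ℕ) : ConvergesOnDisc (binomialWeightSq ε) :=
  have converges := convergesOnDisc_binomialWeight ε
  (converges.sum_antidiagonal converges).of_norm_le fun _ =>
    (norm_sum_le_of_le _ fun _ _ => norm_mul_le _ _).trans (Real.le_norm_self _)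

theorem binomialWeightSq_zero_zero : binomialWeightSq 0 0 = 1 := by
  simp [binomialWeightSq, binomialWeight]

-- The even part of `(1 - z) ^ (-3)`, the square of `(1 - z) ^ (-3/2)`.
theorem binomialWeightSq_zero_succ_add (n : ℕ) :
    binomialWeightSq 0 (n + 1) + binomialWeightSq 1 n = (2 * (n + 1) + 1) * (n + 2) := by
  have vandermonde := multichoose_add (3 / 2 : ℝ) (3 / 2) (2 * n + 2)
  rw [sum_antidiagonal_two_mul_add_two
    (fun i j => Ring.multichoose (3 / 2 : ℝ) i * Ring.multichoose (3 / 2 : ℝ) j),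
    show (3 / 2 + 3 / 2 : ℝ) = 3 by norm_num, multichoose_three] at vandermonde
  have complex := congrArg ((↑) : ℝ → ℂ) vandermonde.symm
  push_cast at complex
  simp only [binomialWeightSq, binomialWeight, add_zero, complex]
  ring

theorem lintegral_enorm_conjSeries_binomialWeightSq_le (ε : ℕ) {b : ℕ → ℂ}
    (hb : IsTraceClass fun i j => b (i + j)) :
    ∫⁻ s : Disc, ‖(s : ℂ)‖ₑ ^ ε * ‖conjSeries (fun n => b n * binomialWeightSq ε n) s‖ₑ
        ∂radialMeasure uniformRadius ≤
      ENNReal.ofReal (4 / Real.pi) * ENNReal.ofReal (traceNorm fun i j => b (i + j)) := by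
  have bound := lintegral_enorm_conjSeries_hankel_le (convergesOnDisc_binomialWeight ε)
    ENNReal.ofReal_ne_top (enorm_binomialWeight_sq_mul_lintegral_le ε) hb
  rw [lintegral_radialMeasure_withDensity (w := fun r => ‖r‖ₑ ^ ε) _ (by fun_prop) (by fun_prop)]
    at bound
  simpa only [enorm_norm, binomialWeightSq] using bound

end BinomialWeight

section HankelDensity

open ComplexConjugate

theorem conjSeries_eq_add_conj_mul {c d e : ℕ → ℂ} (hc : ConvergesOnDisc c)
    (hd : ConvergesOnDisc d) (he : ConvergesOnDisc e) (zero : e 0 = c 0)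
    (succ : ∀ n, e (n + 1) = c (n + 1) + d n) {s : ℂ} (hs : ‖s‖ < 1) :
    conjSeries e s = conjSeries c s + conj s * conjSeries d s := by
  have hcs := (hc.summable_norm hs).of_norm
  have hds := (hd.summable_norm hs).of_norm
  rw [conjSeries, conjSeries, (he.summable_norm hs).of_norm.tsum_eq_zero_add, hcs.tsum_eq_zero_add,
    conjSeries, ← tsum_mul_left, add_assoc,
    ← ((summable_nat_add_iff 1).mpr hcs).tsum_add (hds.mul_left _), zero]
  congr 1
  refine tsum_congr fun n => ?_
  rw [succ]
  ring

/-- The density `∑ₙ (2n+1)(n+1) aₙ s̄ⁿ` whose moments against `2(1 - |s|) dr dθ` are the `aₙ`. -/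
def hankelDensity (a : ℕ → ℂ) : ℂ → ℂ :=
  conjSeries fun n => a n * ((2 * n + 1) * (n + 1))

@[fun_prop]
theorem measurable_hankelDensity (a : ℕ → ℂ) : Measurable (hankelDensity a) :=
  measurable_conjSeries _

theorem convergesOnDisc_two_mul_add_one_mul_add_one :
    ConvergesOnDisc fun n : ℕ => (2 * n + 1 : ℂ) * (n + 1) := by
  refine .of_norm_le_pow 2 2 fun n => ?_
  have norm_eq : ‖(2 * n + 1 : ℂ) * (n + 1)‖ = (2 * n + 1) * (n + 1) := by
    exact_mod_cast Complex.norm_natCast ((2 * n + 1) * (n + 1))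
  rw [norm_eq]
  nlinarith [Nat.cast_nonneg (α := ℝ) n]

theorem hankelDensity_eq_add {a : ℕ → ℂ} {B : ℝ} (ha : ∀ n, ‖a n‖ ≤ B) {s : ℂ} (hs : ‖s‖ < 1) :
    hankelDensity a s = conjSeries (fun n => a n * binomialWeightSq 0 n) s +
      conj s * conjSeries (fun n => a (n + 1) * binomialWeightSq 1 n) s := by
  refine conjSeries_eq_add_conj_mul ((convergesOnDisc_binomialWeightSq 0).bounded_mul ha)
    ((convergesOnDisc_binomialWeightSq 1).bounded_mul fun n => ha (n + 1))
    (convergesOnDisc_two_mul_add_one_mul_add_one.bounded_mul ha) ?_ (fun n => ?_) hs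
  · simp [binomialWeightSq_zero_zero]
  · rw [← mul_add, binomialWeightSq_zero_succ_add]
    push_cast
    ring

theorem lintegral_enorm_hankelDensity_le {a : ℕ → ℂ} (hh : IsTraceClass fun i j => a (i + j))
    (hk : IsTraceClass fun i j => a (i + j + 1)) :
    ∫⁻ s, ‖hankelDensity a (s : ℂ)‖ₑ ∂radialMeasure uniformRadius ≤ ENNReal.ofReal (4 / Real.pi *
      (traceNorm (fun i j => a (i + j)) + traceNorm fun i j => a (i + j + 1))) := by
  obtain ⟨B, hB⟩ := hh.exists_norm_le
  rw [ENNReal.ofReal_mul (by positivity), ENNReal.ofReal_add (traceNorm_nonneg _)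
    (traceNorm_nonneg _), mul_add]
  calc ∫⁻ s : Disc, ‖hankelDensity a s‖ₑ ∂radialMeasure uniformRadius
      ≤ ∫⁻ s : Disc, ‖(s : ℂ)‖ₑ ^ 0 * ‖conjSeries (fun n => a n * binomialWeightSq 0 n) s‖ₑ +
          ‖(s : ℂ)‖ₑ ^ 1 * ‖conjSeries (fun n => a (n + 1) * binomialWeightSq 1 n) s‖ₑ
          ∂radialMeasure uniformRadius := lintegral_mono fun s => by
        rw [hankelDensity_eq_add (a := a) (fun n => hB n 0) (Disc.norm_lt_one s), pow_zero, one_mul,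
          pow_one, ← RCLike.enorm_conj (s : ℂ), ← enorm_mul]
        exact enorm_add_le _ _
    _ ≤ _ := by
        rw [lintegral_add_left (by fun_prop)]
        exact add_le_add (lintegral_enorm_conjSeries_binomialWeightSq_le 0 hh)
          (lintegral_enorm_conjSeries_binomialWeightSq_le 1 hk)

theorem integrable_hankelDensity {a : ℕ → ℂ} (hh : IsTraceClass fun i j => a (i + j))
    (hk : IsTraceClass fun i j => a (i + j + 1)) :
    Integrable (fun s : Disc => hankelDensity a s) (radialMeasure uniformRadius) :=
  ⟨Measurable.aestronglyMeasurable (by fun_prop),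
    (lintegral_enorm_hankelDensity_le hh hk).trans_lt ENNReal.ofReal_lt_top⟩

theorem integral_pow_mul_two_mul_one_sub_uniformRadius (m : ℕ) :
    ∫ r, ((r : ℝ) : ℂ) ^ (2 * m) * (2 * (1 - (r : ℝ))) ∂uniformRadius =
      1 / ((2 * m + 1) * (m + 1)) := by
  have integrable (k : ℕ) : Integrable (fun r : Set.Ioo (0 : ℝ) 1 => ((r : ℝ) : ℂ) ^ k)
      uniformRadius :=
    .of_bound (by fun_prop) 1 (.of_forall fun r => by
      simpa [abs_of_pos r.2.1] using pow_le_one₀ r.2.1.le r.2.2.le)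
  have expand (r : Set.Ioo (0 : ℝ) 1) : ((r : ℝ) : ℂ) ^ (2 * m) * (2 * (1 - (r : ℝ))) =
      2 * (((r : ℝ) : ℂ) ^ (2 * m) - ((r : ℝ) : ℂ) ^ (2 * m + 1)) := by ring
  simp only [expand]
  rw [integral_const_mul, integral_sub (integrable _) (integrable _),
    integral_ofReal_pow_uniformRadius, integral_ofReal_pow_uniformRadius]
  have : (2 * m + 1 : ℂ) ≠ 0 := by exact_mod_cast (2 * m).succ_ne_zero
  have : (m + 1 : ℂ) ≠ 0 := by exact_mod_cast m.succ_ne_zero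
  have : (2 * m + 1 + 1 : ℂ) ≠ 0 := by exact_mod_cast (2 * m + 1).succ_ne_zero
  push_cast
  field_simp
  ring

theorem integral_hankelDensity_mul_pow {a : ℕ → ℂ} {B : ℝ} (ha : ∀ n, ‖a n‖ ≤ B)
    (integrable : Integrable (fun s : Disc => hankelDensity a s) (radialMeasure uniformRadius))
    (m : ℕ) :
    ∫ s, hankelDensity a (s : ℂ) * (s : ℂ) ^ m * (2 * (1 - ‖(s : ℂ)‖))
      ∂radialMeasure uniformRadius = a m := by
  have norm_factor_le (s : Disc) : ‖(s : ℂ) ^ m * (2 * (1 - ‖(s : ℂ)‖))‖ ≤ 2 := by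
    have norm_one_sub : ‖(1 - ‖(s : ℂ)‖ : ℂ)‖ = 1 - ‖(s : ℂ)‖ := by
      rw [← Complex.ofReal_one, ← Complex.ofReal_sub,
        Complex.norm_of_nonneg (sub_nonneg.mpr (Disc.norm_lt_one s).le)]
    rw [norm_mul, norm_mul, norm_one_sub, norm_pow, Complex.norm_ofNat]
    nlinarith [pow_le_one₀ (n := m) (norm_nonneg (s : ℂ)) (Disc.norm_lt_one s).le,
      norm_nonneg (s : ℂ), Disc.norm_lt_one s, pow_nonneg (norm_nonneg (s : ℂ)) m]
  have integrable_mul := integrable.mul_bdd (c := 2)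
    (g := fun s : Disc => (s : ℂ) ^ m * (2 * (1 - ‖(s : ℂ)‖))) (by fun_prop)
    (.of_forall norm_factor_le)
  simp only [← mul_assoc] at integrable_mul
  have : ((2 * m + 1) * (m + 1) : ℂ) ≠ 0 := by
    exact_mod_cast (by positivity : (2 * m + 1) * (m + 1) ≠ 0)
  rw [hankelDensity, integral_conjSeries_mul_pow uniformRadius
      (convergesOnDisc_two_mul_add_one_mul_add_one.bounded_mul ha) (fun r => 2 * (1 - r)) m,
    integral_pow_mul_two_mul_one_sub_uniformRadius, mul_assoc, mul_one_div_cancel this, mul_one]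
  · simpa only [hankelDensity, mul_assoc] using integrable_mul

end HankelDensity

section Representation

open Topology

theorem exists_tendsto_and_eq_add_integral {μ : Measure Disc} {D : Disc → ℂ} (hD : Integrable D μ)
    {φ : ℕ → ℂ} (hφ : ∀ n, φ n - φ (n + 1) = ∫ s, D s * (1 - (s : ℂ)) * (s : ℂ) ^ n ∂μ) :
    ∃ c, Tendsto φ atTop (𝓝 c) ∧ ∀ n, φ n = c + ∫ s, D s * (s : ℂ) ^ n ∂μ := by
  have norm_le (n : ℕ) (s : Disc) : ‖D s * (s : ℂ) ^ n‖ ≤ ‖D s‖ := by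
    rw [norm_mul, norm_pow]
    exact mul_le_of_le_one_right (norm_nonneg _)
      (pow_le_one₀ (norm_nonneg _) (Disc.norm_lt_one s).le)
  have measurable (n : ℕ) : AEStronglyMeasurable (fun s => D s * (s : ℂ) ^ n) μ :=
    hD.aestronglyMeasurable.mul (by fun_prop)
  have integrable (n : ℕ) : Integrable (fun s => D s * (s : ℂ) ^ n) μ :=
    hD.mono (measurable n) (.of_forall (norm_le n))
  have moment_sub (n : ℕ) :
      φ n - φ (n + 1) = (∫ s, D s * (s : ℂ) ^ n ∂μ) - ∫ s, D s * (s : ℂ) ^ (n + 1) ∂μ := by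
    rw [hφ, ← integral_sub (integrable n) (integrable (n + 1))]
    exact integral_congr_ae (.of_forall fun s => by ring)
  have eq_add (n : ℕ) :
      φ n = (φ 0 - ∫ s, D s * (s : ℂ) ^ 0 ∂μ) + ∫ s, D s * (s : ℂ) ^ n ∂μ := by
    induction n with
    | zero => ring
    | succ n ih => linear_combination ih - moment_sub n
  have moment_tendsto : Tendsto (fun n => ∫ s, D s * (s : ℂ) ^ n ∂μ) atTop (𝓝 0) := by
    rw [← integral_zero Disc ℂ (μ := μ)]
    refine tendsto_integral_of_dominated_convergence (fun s => ‖D s‖) measurable hD.norm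
      (fun n => .of_forall (norm_le n)) (.of_forall fun s => ?_)
    simpa using (tendsto_pow_atTop_nhds_zero_of_norm_lt_one (Disc.norm_lt_one s)).const_mul (D s)
  have limit := moment_tendsto.const_add (φ 0 - ∫ s, D s * (s : ℂ) ^ 0 ∂μ)
  rw [add_zero] at limit
  exact ⟨_, limit.congr fun n => (eq_add n).symm, eq_add⟩

/-- The unit complex number in the direction of `z`, with the value `1` at `z = 0`. -/
def unitPhase (z : ℂ) : ℂ := Complex.exp (z.arg * Complex.I)

@[fun_prop]
theorem measurable_unitPhase : Measurable unitPhase := by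
  unfold unitPhase
  fun_prop

theorem norm_unitPhase (z : ℂ) : ‖unitPhase z‖ = 1 := Complex.norm_exp_ofReal_mul_I _

theorem integral_unitPhase_mul_withDensity_enorm {α : Type*} [MeasurableSpace α] {μ : Measure α}
    {D : α → ℂ} (hD : Measurable D) (F : α → ℂ) :
    ∫ s, unitPhase (D s) * F s ∂μ.withDensity (fun s => ‖D s‖ₑ) = ∫ s, D s * F s ∂μ := by
  rw [integral_withDensity_eq_integral_toReal_smul hD.enorm (by simp)]
  refine integral_congr_ae (.of_forall fun s => ?_)
  simp only [toReal_enorm, Complex.real_smul, unitPhase]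
  rw [← mul_assoc, Complex.norm_mul_exp_arg_mul_I]

theorem integrable_and_integral_le_of_lintegral_enorm_le {α : Type*} [MeasurableSpace α]
    {μ : Measure α} {w : α → ℝ} (hw : AEStronglyMeasurable w μ) {b : ℝ} (hb : 0 ≤ b)
    (hle : ∫⁻ s, ‖w s‖ₑ ∂μ ≤ ENNReal.ofReal b) : Integrable w μ ∧ ∫ s, w s ∂μ ≤ b := by
  refine ⟨⟨hw, hle.trans_lt ENNReal.ofReal_lt_top⟩, (Real.le_norm_self _).trans ?_⟩
  rw [← ENNReal.ofReal_le_ofReal_iff hb, ofReal_norm]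
  exact (enorm_integral_le_lintegral_enorm w).trans hle

/-- The density of the representing measure `ν` with respect to `dr dθ`, for a sequence with
differences `aₙ = φ(n) - φ(n+1)`. -/
def representingDensity (a : ℕ → ℂ) (s : ℂ) : ℂ :=
  hankelDensity a s * (2 * (1 - ‖s‖)) / (1 - s)

@[fun_prop]
theorem measurable_representingDensity (a : ℕ → ℂ) : Measurable (representingDensity a) := by
  unfold representingDensity
  fun_prop

theorem norm_representingDensity (a : ℕ → ℂ) {s : ℂ} (hs : ‖s‖ < 1) :
    ‖representingDensity a s‖ = 2 * ‖hankelDensity a s‖ * ((1 - ‖s‖) / ‖1 - s‖) := by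
  rw [representingDensity, norm_div, norm_mul, norm_mul, Complex.norm_ofNat, ← Complex.ofReal_one,
    ← Complex.ofReal_sub, Complex.norm_of_nonneg (sub_nonneg.mpr hs.le), Complex.ofReal_one]
  ring

theorem one_sub_norm_le_norm_one_sub {R : Type*} [SeminormedRing R] [NormOneClass R] (s : R) :
    1 - ‖s‖ ≤ ‖1 - s‖ := by
  simpa only [norm_one] using norm_sub_norm_le 1 s

theorem norm_representingDensity_le (a : ℕ → ℂ) {s : ℂ} (hs : ‖s‖ < 1) :
    ‖representingDensity a s‖ ≤ 2 * ‖hankelDensity a s‖ := by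
  rw [norm_representingDensity a hs]
  exact mul_le_of_le_one_right (by positivity)
    (div_le_one_of_le₀ (one_sub_norm_le_norm_one_sub s) (norm_nonneg _))

theorem one_sub_ne_zero_of_norm_lt_one {R : Type*} [NormedRing R] [NormOneClass R] {s : R}
    (hs : ‖s‖ < 1) : 1 - s ≠ 0 := by
  rw [← norm_pos_iff]
  linarith [one_sub_norm_le_norm_one_sub s]

theorem enorm_representingDensity_mul (a : ℕ → ℂ) {s : ℂ} (hs : ‖s‖ < 1) :
    ‖representingDensity a s‖ₑ * ‖‖1 - s‖ / (1 - ‖s‖)‖ₑ = 2 * ‖hankelDensity a s‖ₑ := by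
  have one_sub_norm_pos : 0 < 1 - ‖s‖ := sub_pos.mpr hs
  have norm_one_sub_ne_zero := norm_ne_zero_iff.mpr (one_sub_ne_zero_of_norm_lt_one hs)
  rw [← ofReal_norm, ← ofReal_norm, ← ofReal_norm, ← ENNReal.ofReal_mul (norm_nonneg _),
    ← ENNReal.ofReal_ofNat, ← ENNReal.ofReal_mul zero_le_two, norm_representingDensity a hs,
    Real.norm_of_nonneg (by positivity)]
  congr 1
  field_simp

/-- The total variation `|ν|` of the representing measure `ν`. -/
def representingMeasure (a : ℕ → ℂ) : Measure Disc :=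
  (radialMeasure uniformRadius).withDensity fun s => ‖representingDensity a (s : ℂ)‖ₑ

theorem integrable_representingDensity {a : ℕ → ℂ}
    (hh : IsTraceClass fun i j => a (i + j)) (hk : IsTraceClass fun i j => a (i + j + 1)) :
    Integrable (fun s : Disc => representingDensity a s) (radialMeasure uniformRadius) :=
  ((integrable_hankelDensity hh hk).norm.const_mul 2).mono'
    (Measurable.aestronglyMeasurable (by fun_prop))
    (.of_forall fun s => norm_representingDensity_le a (Disc.norm_lt_one s))

theorem isFiniteMeasure_representingMeasure {a : ℕ → ℂ}
    (hh : IsTraceClass fun i j => a (i + j)) (hk : IsTraceClass fun i j => a (i + j + 1)) :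
    IsFiniteMeasure (representingMeasure a) :=
  isFiniteMeasure_withDensity (integrable_representingDensity hh hk).2.ne

theorem lintegral_enorm_norm_one_sub_div_representingMeasure_le {a : ℕ → ℂ}
    (hh : IsTraceClass fun i j => a (i + j)) (hk : IsTraceClass fun i j => a (i + j + 1)) :
    ∫⁻ s : Disc, ‖‖1 - (s : ℂ)‖ / (1 - ‖(s : ℂ)‖)‖ₑ ∂representingMeasure a ≤ ENNReal.ofReal
      (8 / Real.pi * (traceNorm (fun i j => a (i + j)) + traceNorm fun i j => a (i + j + 1))) := by
  rw [representingMeasure, lintegral_withDensity_eq_lintegral_mul _ (by fun_prop) (by fun_prop)]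
  simp only [Pi.mul_apply, enorm_representingDensity_mul a (Disc.norm_lt_one _)]
  rw [lintegral_const_mul _ (by fun_prop), show 8 / Real.pi = 2 * (4 / Real.pi) by ring, mul_assoc,
    ENNReal.ofReal_mul zero_le_two, ENNReal.ofReal_ofNat]
  gcongr
  exact lintegral_enorm_hankelDensity_le hh hk

theorem exists_tendsto_and_eq_add_integral_representingMeasure {φ : ℕ → ℂ} (hφ : MemC φ) :
    ∃ c, Tendsto φ atTop (𝓝 c) ∧ ∀ n, φ n = c +
      ∫ s, unitPhase (representingDensity (fun k => φ k - φ (k + 1)) s) * (s : ℂ) ^ n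
        ∂representingMeasure fun k => φ k - φ (k + 1) := by
  obtain ⟨hh, hk⟩ := hφ
  obtain ⟨B, hB⟩ := hh.exists_norm_le
  simp only [representingMeasure, integral_unitPhase_mul_withDensity_enorm (D := fun s : Disc =>
    representingDensity (fun k => φ k - φ (k + 1)) s) (by fun_prop)]
  refine exists_tendsto_and_eq_add_integral (integrable_representingDensity hh hk) fun n => ?_
  rw [← integral_hankelDensity_mul_pow (a := fun k => φ k - φ (k + 1)) (fun k => hB k 0)
    (integrable_hankelDensity hh hk) n]
  refine integral_congr_ae (.of_forall fun s => ?_)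
  have := one_sub_ne_zero_of_norm_lt_one (Disc.norm_lt_one s)
  simp only [representingDensity]
  field_simp

end Representation

/-- If `φ ∈ 𝒞`, then there are `c ∈ ℂ` and a complex Borel measure `ν` on the
open unit disc (written in polar form `ν = f · ρ` with `ρ = |ν|` a finite Borel measure and
`‖f‖ = 1` a.e.) such that `φ(n) = c + ∫_𝔻 sⁿ dν(s)` for all `n`,
`∫_𝔻 |1−s|/(1−|s|) d|ν|(s) < ∞`, and moreover
`|c| + ∫_𝔻 |1−s|/(1−|s|) d|ν|(s) ≤ (8/π)·‖φ‖_𝒞`. -/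
theorem stmt1 (φ : ℕ → ℂ) (hφ : MemC φ) :
    ∃ (c : ℂ) (ρ : Measure (Metric.ball (0:ℂ) 1)) (f : Metric.ball (0:ℂ) 1 → ℂ),
      IsFiniteMeasure ρ ∧
      AEStronglyMeasurable f ρ ∧
      (∀ᵐ s ∂ρ, ‖f s‖ = 1) ∧
      (∀ n : ℕ, φ n = c + ∫ s, f s * (s : ℂ) ^ n ∂ρ) ∧
      Integrable (fun s : Metric.ball (0:ℂ) 1 => ‖1 - (s : ℂ)‖ / (1 - ‖(s : ℂ)‖)) ρ ∧
      ‖c‖ + ∫ s, ‖1 - (s : ℂ)‖ / (1 - ‖(s : ℂ)‖) ∂ρ ≤ (8 / Real.pi) * CNorm φ := by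
  obtain ⟨c, tendsto, moments⟩ := exists_tendsto_and_eq_add_integral_representingMeasure hφ
  obtain ⟨hh, hk⟩ := hφ
  obtain ⟨integrable, integral_le⟩ := integrable_and_integral_le_of_lintegral_enorm_le
    (Measurable.aestronglyMeasurable (by fun_prop))
    (mul_nonneg (by positivity) (add_nonneg (traceNorm_nonneg _) (traceNorm_nonneg _)))
    (lintegral_enorm_norm_one_sub_div_representingMeasure_le (a := fun k => φ k - φ (k + 1)) hh hk)
  have one_le : 1 ≤ 8 / Real.pi := by
    rw [one_le_div Real.pi_pos]
    linarith [Real.pi_le_four]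
  refine ⟨c, _, _, isFiniteMeasure_representingMeasure hh hk,
    Measurable.aestronglyMeasurable (by fun_prop), .of_forall fun s => norm_unitPhase _, moments,
    integrable, ?_⟩
  calc _ ≤ 8 / Real.pi * ‖c‖ + 8 / Real.pi * (traceNorm (hankelH φ) + traceNorm (hankelK φ)) :=
        add_le_add (le_mul_of_one_le_left (norm_nonneg c) one_le) integral_le
    _ = 8 / Real.pi * CNorm φ := by
        rw [CNorm, tendsto.limUnder_eq]
        ring

end
end
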